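/- Let α be a terminal-free pattern. Then there exists a Janus automaton M with vd(α) + 1 counters such that L(M) = L(α). -/

import Mathlib

/-! Patterns: variables are natural numbers; a terminal-free pattern is a
nonempty list of variables, with 1-based positions. -/

/-- The variable at (1-based) position `j` of the pattern `α`. -/
def patAt (α : List ℕ) (j : ℕ) : ℕ := α.getD (j - 1) 0

/-- The set of (1-based) positions of the pattern `α` carrying the variable `x`. -/
def varpos (α : List ℕ) (x : ℕ) : Finset ℕ :=
  (Finset.Icc 1 α.length).filter (fun j => patAt α j = x)

/-- A matching order for the variable `x` in the pattern `α`: a sequence of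
`|α|_x − 1` pairs of positions of `x`, each with smaller first component,
whose edge set makes the set of positions of `x` a connected graph. -/
def IsMatchingOrder (α : List ℕ) (x : ℕ) (M : List (ℕ × ℕ)) : Prop :=
  M.length + 1 = α.count x ∧
  (∀ p ∈ M, p.1 ∈ varpos α x ∧ p.2 ∈ varpos α x ∧ p.1 < p.2) ∧
  ∀ a ∈ varpos α x, ∀ b ∈ varpos α x,
    Relation.ReflTransGen (fun u v => (u, v) ∈ M ∨ (v, u) ∈ M) a b

/-- A complete matching order for `α`: a tuple of `Σ_{x ∈ var(α)} (|α|_x − 1)`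
matching positions containing, for every variable `x` of `α`, all the elements
of some matching order for `x` in `α`. -/
def IsCompleteMatchingOrder (α : List ℕ) (C : List (ℕ × ℕ)) : Prop :=
  ∃ M : ℕ → List (ℕ × ℕ),
    (∀ x ∈ α.toFinset, IsMatchingOrder α x (M x)) ∧
    C.length = ∑ x ∈ α.toFinset, (α.count x - 1) ∧
    ∀ x ∈ α.toFinset, ∀ p ∈ M x, p ∈ C
/-! Janus operating modes. -/

/-- The two head markers: `lam` (λ) for the left head, `rho` (ρ) for the right head. -/
inductive Marker : Type
  | lam
  | rho
deriving DecidableEq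

/-- The map `g` from Definition 4: `g(j,j') = (j+1, …, j'−1)` and
`g(j',j) = (j', j'−1, …, j)` for `j < j'`. -/
def gfun (j j' : ℕ) : List ℕ :=
  if j < j' then (List.range (j' - j - 1)).map (fun i => j + 1 + i)
  else if j' < j then (List.range (j - j' + 1)).map (fun i => j - i)
  else []

/-- The position of the most recent entry with marker `m` among the first `j+1`
entries of `L`; if there is none, the first entry of `L` with marker `m`. -/
def latestEntry (L : List (ℕ × Marker)) (j : ℕ) (m : Marker) : Option ℕ :=
  match ((L.take (j + 1)).filter (fun e => decide (e.2 = m))).getLast? with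
  | some e => some e.1
  | none => ((L.filter (fun e => decide (e.2 = m))).head?).map Prod.fst

/-- At every prefix of `L`, the most recent λ-entry is ≤ the most recent ρ-entry
(comparing with the first λ-entry resp. ρ-entry when none has occurred yet). -/
def GoodInterleaving (L : List (ℕ × Marker)) : Prop :=
  ∀ j < L.length, ∀ pl pr,
    latestEntry L j Marker.lam = some pl → latestEntry L j Marker.rho = some pr → pl ≤ pr

/-- `Δ` is a Janus operating mode for `α`, derived from some complete matching
order `C` for `α` (with `(l_0, r_0) := (0, 0)`): each `D_i` is an interleaving
`D'_i` of `g(l_{i−1}, l_i)` with λ-markers and `g(r_{i−1}, r_i)` with ρ-markers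
(preserving the relative order of each, and such that at every prefix the most
recent λ-entry is ≤ the most recent ρ-entry), followed by `(r_i, ρ), (l_i, λ)`. -/
def IsJanusOperatingMode (α : List ℕ) (Δ : List (List (ℕ × Marker))) : Prop :=
  ∃ C : List (ℕ × ℕ),
    IsCompleteMatchingOrder α C ∧
    Δ.length = C.length ∧
    ∀ i < C.length,
      ∃ D' : List (ℕ × Marker),
        D'.filter (fun e => decide (e.2 = Marker.lam)) =
          (gfun (if i = 0 then 0 else (C.getD (i - 1) (0, 0)).1) (C.getD i (0, 0)).1).map
            (fun p => (p, Marker.lam)) ∧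
        D'.filter (fun e => decide (e.2 = Marker.rho)) =
          (gfun (if i = 0 then 0 else (C.getD (i - 1) (0, 0)).2) (C.getD i (0, 0)).2).map
            (fun p => (p, Marker.rho)) ∧
        GoodInterleaving D' ∧
        Δ.getD i [] =
          D' ++ [((C.getD i (0, 0)).2, Marker.rho), ((C.getD i (0, 0)).1, Marker.lam)]

open Classical in
/-- For a string `D` of variables (0-based indexing), `sVal D i` is the number of
variables `x ≠ D_i` having an occurrence both strictly before and strictly after
position `i` in `D`. -/
noncomputable def sVal (D : List ℕ) (i : ℕ) : ℕ :=
  (D.toFinset.filter (fun x =>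
    x ≠ D.getD i 0 ∧ (∃ j, j < i ∧ D.getD j 0 = x) ∧
    ∃ j', i < j' ∧ j' < D.length ∧ D.getD j' 0 = x)).card

/-- The head movement indicator of a Janus operating mode: the concatenation of
its tuples `D_1, …, D_k`. -/
def hmi (Δ : List (List (ℕ × Marker))) : List (ℕ × Marker) := Δ.flatten

/-- The string of variables `D_α = y_{d'_1} · y_{d'_2} · … · y_{d'_{k'}}`
associated with the head movement indicator of `Δ` and the pattern `α`. -/
def hmiVars (α : List ℕ) (Δ : List (List (ℕ × Marker))) : List ℕ :=
  (hmi Δ).map (fun e => patAt α e.1)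

/-- The counter number of a Janus operating mode `Δ` for `α`:
`cn(Δ) = max{s_i | 1 ≤ i ≤ k'}`. -/
noncomputable def cnOf (α : List ℕ) (Δ : List (List (ℕ × Marker))) : ℕ :=
  (Finset.range (hmiVars α Δ).length).sup (sVal (hmiVars α Δ))

/-- The variable distance of `α`: the smallest `k ≥ 0` such that for every
variable `x`, every factorisation `α = β·x·γ·x·δ` with `|γ|_x = 0` satisfies
`|var(γ)| ≤ k`. -/
noncomputable def vd (α : List ℕ) : ℕ :=
  sInf {k : ℕ | ∀ x : ℕ, ∀ β γ δ : List ℕ,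
    α = β ++ [x] ++ γ ++ [x] ++ δ → γ.count x = 0 → γ.toFinset.card ≤ k}
/-- The pattern language of a terminal-free pattern `α` over the terminal
alphabet `A`: all images of `α` under substitutions (morphisms `X* → A*`). -/
def PatternLang (A : Type) (α : List ℕ) : Set (List A) :=
  {w | ∃ σ : ℕ → List A, w = (α.map σ).flatten}

/-- A tape symbol of a Janus automaton: the left endmarker `¢`, the right
endmarker `$`, or an input symbol. -/
inductive JSym (A : Type) : Type
  | lend
  | rend
  | ch (a : A)

/-- A head instruction of a Janus automaton: `−1`, `0` or `1`. -/
inductive HInstr : Type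
  | left
  | stay
  | right

def HInstr.toInt : HInstr → ℤ
  | .left => -1
  | .stay => 0
  | .right => 1

/-- A counter instruction of a Janus automaton: `0` (keep), `1` (increment)
or `r` (reset). -/
inductive CInstr : Type
  | keep
  | inc
  | reset

/-- A Janus automaton with `k` counters over the input alphabet `A`:
a finite state set `Q`, an initial state `q0`, a set `F` of accepting states,
and a transition function
`δ : Q × Σ² × {t_=, t_<}^k → Q × {−1,0,1}² × {0,1,r}^k`
(the counter message `true` stands for `t_=`, i.e. counter value = bound). -/
structure JFA (k : ℕ) (A : Type) : Type 1 where
  Q : Type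
  fin : Fintype Q
  q0 : Q
  F : Set Q
  δ : Q → JSym A → JSym A → (Fin k → Bool) → Q × (HInstr × HInstr) × (Fin k → CInstr)

/-- A configuration of a Janus automaton with `k` counters and state set `Q`:
a state, the two head positions, and the counter values and counter bounds. -/
structure JConfig (k : ℕ) (Q : Type) where
  q : Q
  h1 : ℕ
  h2 : ℕ
  cval : Fin k → ℕ
  cbnd : Fin k → ℕ

/-- The symbol at position `h` of the tape `¢w$` (position `0` is `¢`,
positions `1, …, |w|` carry `w`, position `|w|+1` is `$`). -/
def tapeSym {A : Type} (w : List A) (h : ℕ) : JSym A :=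
  if h = 0 then JSym.lend
  else
    match w[h - 1]? with
    | some a => JSym.ch a
    | none => JSym.rend

/-- A valid configuration on input `¢w$`: `0 ≤ h_1 ≤ h_2 ≤ |w|+1` and
`0 ≤ c_i ≤ C_i ≤ |w|` for every counter `i`. -/
def JValid {k : ℕ} {Q : Type} {A : Type} (w : List A) (c : JConfig k Q) : Prop :=
  c.h1 ≤ c.h2 ∧ c.h2 ≤ w.length + 1 ∧ ∀ i, c.cval i ≤ c.cbnd i ∧ c.cbnd i ≤ w.length

/-- An atomic move of the Janus automaton `M` on input `¢w$`: the transition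
function is applied to the current state, the scanned symbols and the counter
messages; the heads move by the head instructions if
`0 ≤ h_1 + r_1 ≤ h_2 + r_2 ≤ |w|+1` and stay otherwise; a reset counter gets
value `0` and a nondeterministically guessed bound `≤ |w|`, and otherwise the
bound is unchanged and the value is incremented strictly modulo the bound. -/
def JStep {k : ℕ} {A : Type} (M : JFA k A) (w : List A) (c c' : JConfig k M.Q) : Prop :=
  let res := M.δ c.q (tapeSym w c.h1) (tapeSym w c.h2) (fun i => decide (c.cval i = c.cbnd i))
  let t1 : ℤ := (c.h1 : ℤ) + res.2.1.1.toInt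
  let t2 : ℤ := (c.h2 : ℤ) + res.2.1.2.toInt
  JValid w c ∧ JValid w c' ∧
  c'.q = res.1 ∧
  (if 0 ≤ t1 ∧ t1 ≤ t2 ∧ t2 ≤ (w.length : ℤ) + 1
    then (c'.h1 : ℤ) = t1 ∧ (c'.h2 : ℤ) = t2
    else c'.h1 = c.h1 ∧ c'.h2 = c.h2) ∧
  ∀ i : Fin k,
    match res.2.2 i with
    | CInstr.reset => c'.cval i = 0 ∧ c'.cbnd i ≤ w.length
    | CInstr.keep => c'.cbnd i = c.cbnd i ∧ c'.cval i = c.cval i % (c.cbnd i + 1)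
    | CInstr.inc => c'.cbnd i = c.cbnd i ∧ c'.cval i = (c.cval i + 1) % (c.cbnd i + 1)

/-- `M` accepts `w` iff a configuration with an accepting state is reachable
from the initial configuration by a sequence of atomic moves. -/
def JFA.Accepts {k : ℕ} {A : Type} (M : JFA k A) (w : List A) : Prop :=
  ∃ c : JConfig k M.Q,
    Relation.ReflTransGen (JStep M w) ⟨M.q0, 0, 0, fun _ => 0, fun _ => 0⟩ c ∧ c.q ∈ M.F

/-- The language accepted by the Janus automaton `M`. -/
def JFA.Lang {k : ℕ} {A : Type} (M : JFA k A) : Set (List A) := {w | M.Accepts w}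
/-! ### Straight-line programs and their machines -/
namespace JPat

/-- An instruction: loop a head move `B c` times, guess a counter bound, or move once. -/
inductive Ins (k : ℕ) (A : Type) : Type
  | loop (c : Fin k) (mv : JSym A → JSym A → Option (HInstr × HInstr))
  | reset (c : Fin k)
  | once (mv : JSym A → JSym A → Option (HInstr × HInstr))

structure St (k : ℕ) where
  h : ℕ × ℕ
  B : Fin k → ℕ

def hm (n : ℕ) (h : ℕ × ℕ) (r : HInstr × HInstr) : ℕ × ℕ :=
  if 0 ≤ (h.1 : ℤ) + r.1.toInt ∧ (h.1 : ℤ) + r.1.toInt ≤ (h.2 : ℤ) + r.2.toInt ∧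
      (h.2 : ℤ) + r.2.toInt ≤ (n : ℤ) + 1
  then (((h.1 : ℤ) + r.1.toInt).toNat, ((h.2 : ℤ) + r.2.toInt).toNat) else h

def Mv {A : Type} (w : List A) (mv : JSym A → JSym A → Option (HInstr × HInstr))
    (h h' : ℕ × ℕ) : Prop :=
  ∃ r, mv (tapeSym w h.1) (tapeSym w h.2) = some r ∧ h' = hm w.length h r

def Iter {A : Type} (w : List A) (mv : JSym A → JSym A → Option (HInstr × HInstr)) :
    ℕ → ℕ × ℕ → ℕ × ℕ → Prop
  | 0, h, h' => h' = h
  | t + 1, h, h' => ∃ h'', Iter w mv t h h'' ∧ Mv w mv h'' h'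

def Ex {k : ℕ} {A : Type} (w : List A) : Ins k A → St k → St k → Prop
  | .loop c mv, s, s' => s'.B = s.B ∧ Iter w mv (s.B c) s.h s'.h
  | .reset c, s, s' => s'.h = s.h ∧ ∃ b, b ≤ w.length ∧ s'.B = Function.update s.B c b
  | .once mv, s, s' => s'.B = s.B ∧ Mv w mv s.h s'.h

def Run {k : ℕ} {A : Type} (w : List A) : List (Ins k A) → St k → St k → Prop
  | [], s, s' => s' = s
  | i :: P, s, s' => ∃ s'', Ex w i s s'' ∧ Run w P s'' s'

theorem run_append {k : ℕ} {A : Type} (w : List A) (P R : List (Ins k A)) (s s' : St k) :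
    Run w (P ++ R) s s' ↔ ∃ s'', Run w P s s'' ∧ Run w R s'' s' := by
  induction P generalizing s with
  | nil => simp [Run]
  | cons i P ih =>
    simp only [List.cons_append, Run, ih]
    constructor
    · rintro ⟨a, h, b, h1, h2⟩; exact ⟨b, ⟨a, h, h1⟩, h2⟩
    · rintro ⟨b, ⟨a, h, h1⟩, h2⟩; exact ⟨a, h, b, h1, h2⟩

def nxt {N : ℕ} (q : Fin (N + 1)) : Fin (N + 1) := ⟨min (q.1 + 1) N, by omega⟩

/-- The machine executing the program `P`. -/
def mach {k : ℕ} {A : Type} (P : List (Ins k A)) : JFA k A where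
  Q := Fin (P.length + 1)
  fin := inferInstance
  q0 := ⟨0, by omega⟩
  F := {q | q.1 = P.length}
  δ := fun q a b m =>
    match P[q.1]? with
    | none => (q, (.stay, .stay), fun _ => .keep)
    | some (.loop c mv) =>
      if m c = true then (nxt q, (.stay, .stay), fun i => if i = c then .inc else .keep)
      else
        match mv a b with
        | none => (q, (.stay, .stay), fun _ => .keep)
        | some r => (q, r, fun i => if i = c then .inc else .keep)
    | some (.reset c) => (nxt q, (.stay, .stay), fun i => if i = c then .reset else .keep)
    | some (.once mv) =>
        match mv a b with
        | none => (q, (.stay, .stay), fun _ => .keep)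
        | some r => (nxt q, r, fun _ => .keep)

def VH (n : ℕ) (h : ℕ × ℕ) : Prop := h.1 ≤ h.2 ∧ h.2 ≤ n + 1

theorem hm_valid {n : ℕ} {h : ℕ × ℕ} (r : HInstr × HInstr) (hv : VH n h) : VH n (hm n h r) := by
  unfold hm VH at *
  split_ifs with hc
  · simp only; omega
  · exact hv

theorem hm_stay {n : ℕ} {h : ℕ × ℕ} : hm n h (.stay, .stay) = h := by
  unfold hm; split_ifs
  · simp [HInstr.toInt]
  · rfl

theorem iter_valid {A : Type} {w : List A} {mv} {t : ℕ} {h h' : ℕ × ℕ} (hv : VH w.length h)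
    (hi : Iter w mv t h h') : VH w.length h' := by
  induction t generalizing h' with
  | zero => simp only [Iter] at hi; rwa [hi]
  | succ t ih =>
    obtain ⟨h'', h1, r, _, rfl⟩ := hi
    exact hm_valid r (ih h1)

/-- Rephrasing of an atomic move. -/
theorem step_iff {k : ℕ} {A : Type} (M : JFA k A) (w : List A) (c c' : JConfig k M.Q)
    (hv : JValid w c) :
    JStep M w c c' ↔ ∃ res, res = M.δ c.q (tapeSym w c.h1) (tapeSym w c.h2)
        (fun i => decide (c.cval i = c.cbnd i)) ∧
      c'.q = res.1 ∧ (c'.h1, c'.h2) = hm w.length (c.h1, c.h2) res.2.1 ∧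
      ∀ i : Fin k,
        match res.2.2 i with
        | CInstr.reset => c'.cval i = 0 ∧ c'.cbnd i ≤ w.length
        | CInstr.keep => c'.cbnd i = c.cbnd i ∧ c'.cval i = c.cval i
        | CInstr.inc => c'.cbnd i = c.cbnd i ∧
            c'.cval i = if c.cval i = c.cbnd i then 0 else c.cval i + 1 := by
  have hinc : ∀ i, (c.cval i + 1) % (c.cbnd i + 1) =
      if c.cval i = c.cbnd i then 0 else c.cval i + 1 := by
    intro i
    have := (hv.2.2 i).1
    split_ifs with h
    · rw [h]; simp
    · exact Nat.mod_eq_of_lt (by omega)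
  have hkeep : ∀ i, c.cval i % (c.cbnd i + 1) = c.cval i := by
    intro i
    have := (hv.2.2 i).1
    exact Nat.mod_eq_of_lt (by omega)
  unfold JStep
  simp only [hinc, hkeep]
  constructor
  · rintro ⟨_, _, h1, h2, h3⟩
    refine ⟨_, rfl, h1, ?_, h3⟩
    unfold hm
    simp only
    split_ifs at h2 ⊢ with hc
    · ext <;> simp only <;> omega
    · simp [h2]
  · rintro ⟨res, rfl, h1, h2, h3⟩
    refine ⟨hv, ⟨?_, ?_, ?_⟩, h1, ?_, h3⟩
    · have := hm_valid (M.δ c.q (tapeSym w c.h1) (tapeSym w c.h2)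
        (fun i => decide (c.cval i = c.cbnd i))).2.1 (n := w.length) (h := (c.h1, c.h2)) ⟨hv.1, hv.2.1⟩
      rw [← h2] at this; exact this.1
    · have := hm_valid (M.δ c.q (tapeSym w c.h1) (tapeSym w c.h2)
        (fun i => decide (c.cval i = c.cbnd i))).2.1 (n := w.length) (h := (c.h1, c.h2)) ⟨hv.1, hv.2.1⟩
      rw [← h2] at this; exact this.2
    · intro i
      have h4 := h3 i
      have h5 := hv.2.2 i
      split at h4
      · omega
      · omega
      · obtain ⟨h6, h7⟩ := h4
        rw [h6, h7]; split_ifs <;> omega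
    · unfold hm at h2
      simp only at h2
      split_ifs at h2 ⊢ with hc
      · simp only [Prod.mk.injEq] at h2; omega
      · simpa using h2

def cfg {k : ℕ} {Q : Type} (q : Q) (s : St k) : JConfig k Q := ⟨q, s.h.1, s.h.2, fun _ => 0, s.B⟩

def VS {k : ℕ} (n : ℕ) (s : St k) : Prop := VH n s.h ∧ ∀ i, s.B i ≤ n

theorem ex_valid {k : ℕ} {A : Type} {w : List A} {i : Ins k A} {s s' : St k}
    (hv : VS w.length s) (he : Ex w i s s') : VS w.length s' := by
  cases i with
  | loop c mv => exact ⟨iter_valid hv.1 he.2, by rw [he.1]; exact hv.2⟩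
  | reset c =>
    obtain ⟨h1, b, hb, h2⟩ := he
    refine ⟨by rw [h1]; exact hv.1, fun i => ?_⟩
    rw [h2]
    by_cases hi : i = c
    · subst hi; simpa using hb
    · simpa [hi] using hv.2 i
  | once mv =>
    obtain ⟨h1, r, _, h3⟩ := he
    exact ⟨by rw [h3]; exact hm_valid r hv.1, by rw [h1]; exact hv.2⟩

theorem run_valid {k : ℕ} {A : Type} {w : List A} {P : List (Ins k A)} {s s' : St k}
    (hv : VS w.length s) (he : Run w P s s') : VS w.length s' := by
  induction P generalizing s with
  | nil => simp only [Run] at he; rwa [he]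
  | cons i P ih => obtain ⟨a, h1, h2⟩ := he; exact ih (ex_valid hv h1) h2

theorem sim_loop {k : ℕ} {A : Type} {P : List (Ins k A)} {w : List A} {q : Fin (P.length + 1)}
    {c : Fin k} {mv} (hq : P[q.1]? = some (.loop c mv)) {s : St k} (hv : VS w.length s)
    (t : ℕ) (ht : t ≤ s.B c) (h' : ℕ × ℕ) (hi : Iter w mv t s.h h') :
    Relation.ReflTransGen (JStep (mach P) w) (cfg (Q := (mach P).Q) q s)
      ⟨q, h'.1, h'.2, fun i => if i = c then t else 0, s.B⟩ := by
  induction t generalizing h' with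
  | zero =>
    simp only [Iter] at hi; subst hi
    simp only [ite_self]; exact .refl
  | succ t ih =>
    obtain ⟨h'', h1, r, h2, rfl⟩ := hi
    refine (ih (by omega) h'' h1).tail ?_
    have hvv := iter_valid hv.1 h1
    rw [step_iff]
    · refine ⟨_, rfl, ?_⟩
      have : t ≠ s.B c := by omega
      simp only [mach, hq, if_true, decide_eq_true_eq, if_neg this, h2]
      refine ⟨trivial, trivial, fun i => ?_⟩
      by_cases hi : i = c
      · subst hi; simp [this]
      · simp [hi]
    · refine ⟨hvv.1, hvv.2, fun i => ⟨?_, hv.2 i⟩⟩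
      simp only; split_ifs with h
      · subst h; omega
      · omega

theorem sim_ins {k : ℕ} {A : Type} {P : List (Ins k A)} {w : List A} {q : Fin (P.length + 1)}
    {i : Ins k A} (hq : P[q.1]? = some i) {s s' : St k} (hv : VS w.length s) (he : Ex w i s s') :
    Relation.ReflTransGen (JStep (mach P) w) (cfg (Q := (mach P).Q) q s)
      (cfg (Q := (mach P).Q) (nxt q) s') := by
  have hvc : JValid w (cfg (Q := (mach P).Q) q s) :=
    ⟨hv.1.1, hv.1.2, fun i => ⟨Nat.zero_le _, hv.2 i⟩⟩
  obtain ⟨h', B'⟩ := s'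
  cases i with
  | loop c mv =>
    obtain ⟨h1, h2⟩ := he
    simp only at h1 h2; subst h1
    refine (sim_loop hq hv _ le_rfl _ h2).tail ?_
    have hvv := iter_valid hv.1 h2
    rw [step_iff]
    · refine ⟨_, rfl, ?_⟩
      simp only [mach, hq, if_true, decide_true]
      refine ⟨rfl, hm_stay.symm, fun i => ?_⟩
      by_cases hi : i = c
      · subst hi; simp [cfg]
      · simp [hi, cfg]
    · refine ⟨hvv.1, hvv.2, fun i => ⟨?_, hv.2 i⟩⟩
      simp only; split_ifs with h
      · subst h; omega
      · omega
  | reset c =>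
    obtain ⟨h1, b, hb, h2⟩ := he
    simp only at h1 h2; subst h1; subst h2
    refine Relation.ReflTransGen.single ?_
    rw [step_iff _ _ _ _ hvc]
    refine ⟨_, rfl, ?_⟩
    simp only [mach, cfg, hq]
    refine ⟨trivial, hm_stay.symm, fun i => ?_⟩
    by_cases hi : i = c
    · subst hi; simp [hb]
    · simp [hi]
  | once mv =>
    obtain ⟨h1, r, h2, h3⟩ := he
    simp only at h1 h3; subst h1; subst h3
    refine Relation.ReflTransGen.single ?_
    rw [step_iff _ _ _ _ hvc]
    refine ⟨_, rfl, ?_⟩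
    simp only [mach, cfg, hq, h2]
    simp

theorem sim_run {k : ℕ} {A : Type} {P : List (Ins k A)} {w : List A} (R : List (Ins k A))
    (P' : List (Ins k A)) (hP : P = P' ++ R) {s s' : St k} (hv : VS w.length s)
    (he : Run w R s s') (q : Fin (P.length + 1)) (hq : q.1 = P'.length) :
    ∃ q' : Fin (P.length + 1), q'.1 = P.length ∧
    Relation.ReflTransGen (JStep (mach P) w) (cfg (Q := (mach P).Q) q s)
      (cfg (Q := (mach P).Q) q' s') := by
  induction R generalizing s P' q with
  | nil =>
    simp only [Run] at he; subst he
    exact ⟨q, by simp [hP, hq], .refl⟩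
  | cons i R ih =>
    obtain ⟨a, h1, h2⟩ := he
    have hqi : P[q.1]? = some i := by rw [hq, hP]; simp
    obtain ⟨q', h3, h4⟩ := ih (P' ++ [i]) (by simp [hP]) (ex_valid hv h1) h2 (nxt q)
      (by simp only [nxt, hP, hq]; simp)
    exact ⟨q', h3, (sim_ins hqi hv h1).trans h4⟩

/-- Where a configuration stands inside the current instruction. -/
def Mid {k : ℕ} {A : Type} (w : List A) (s : St k) (h : ℕ × ℕ) (v : Fin k → ℕ) :
    Option (Ins k A) → Prop
  | some (.loop c mv) => (∀ i, i ≠ c → v i = 0) ∧ Iter w mv (v c) s.h h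
  | _ => (∀ i, v i = 0) ∧ h = s.h

theorem mid_start {k : ℕ} {A : Type} (w : List A) (s : St k) (v : Fin k → ℕ)
    (hv : ∀ i, v i = 0) (o : Option (Ins k A)) : Mid w s s.h v o := by
  unfold Mid
  split
  · exact ⟨fun i _ => hv i, by rw [hv]; rfl⟩
  · exact ⟨hv, rfl⟩

def MInv {k : ℕ} {A : Type} (P : List (Ins k A)) (w : List A) (s0 : St k)
    (c : JConfig k (Fin (P.length + 1))) : Prop :=
  ∃ s, Run w (P.take c.q.1) s0 s ∧ c.cbnd = s.B ∧ Mid w s (c.h1, c.h2) c.cval P[c.q.1]?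

theorem take_nxt {k : ℕ} {A : Type} {P : List (Ins k A)} {q : Fin (P.length + 1)} {i : Ins k A}
    (hq : P[q.1]? = some i) : P.take (nxt q).1 = P.take q.1 ++ [i] := by
  obtain ⟨h, rfl⟩ := List.getElem?_eq_some_iff.1 hq
  have : (nxt q).1 = q.1 + 1 := by simp only [nxt]; omega
  rw [this, List.take_add_one, hq]; rfl

theorem minv_step {k : ℕ} {A : Type} {P : List (Ins k A)} {w : List A} {s0 : St k}
    {c c' : JConfig k (Fin (P.length + 1))}
    (hi : MInv P w s0 c) (hs : JStep (mach P) w c c') : MInv P w s0 c' := by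
  have hvc : JValid w c := hs.1
  replace hs := (step_iff (mach P) w c c' hvc).1 hs
  obtain ⟨res, hres, hq', hh', hc'⟩ := hs
  obtain ⟨s, hrun, hB, hmid⟩ := hi
  have stuck : res = (c.q, (.stay, .stay), fun _ => .keep) → MInv P w s0 c' := by
    rintro rfl
    simp only [hm_stay] at hq' hh' hc'
    refine ⟨s, by rw [hq']; exact hrun, ?_, ?_⟩
    · rw [← hB]; exact funext fun i => (hc' i).1
    · rw [hh', hq', show c'.cval = c.cval from funext fun i => (hc' i).2]; exact hmid
  have adv : ∀ ins s', P[c.q.1]? = some ins → Ex w ins s s' → c'.q = nxt c.q →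
      c'.cbnd = s'.B → (∀ i, c'.cval i = 0) → (c'.h1, c'.h2) = s'.h → MInv P w s0 c' := by
    intro ins s' h1 h2 h3 h4 h5 h6
    refine ⟨s', ?_, h4, ?_⟩
    · rw [h3, take_nxt h1, run_append]; exact ⟨s, hrun, s', h2, rfl⟩
    · rw [h6]; exact mid_start _ _ _ h5 _
  rcases hins : P[c.q.1]? with _ | ins
  · apply stuck; rw [hres]; simp only [mach, hins]
  · cases ins with
    | loop cc mv =>
      simp only [hins, Mid] at hmid
      obtain ⟨hz, hit⟩ := hmid
      simp only [mach, hins] at hres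
      by_cases hcb : c.cval cc = c.cbnd cc
      · simp only [hcb, decide_true, if_true] at hres
        subst hres
        simp only [hm_stay] at hq' hh' hc'
        refine adv _ ⟨(c.h1, c.h2), s.B⟩ hins ⟨rfl, ?_⟩ hq' ?_ ?_ hh'
        · rw [← hB, ← hcb]; exact hit
        · rw [← hB]; funext i
          have := hc' i; by_cases h : i = cc
          · simp [h] at this; simp [h, this.1]
          · simp [h] at this; exact this.1
        · intro i
          have := hc' i; by_cases h : i = cc
          · simp [h] at this; rw [h, this.2]; simp [hcb]
          · simp [h] at this; rw [this.2, hz i h]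
      · simp only [hcb, decide_false] at hres
        rcases hr : mv (tapeSym w c.h1) (tapeSym w c.h2) with _ | r
        · apply stuck; rw [hres]; simp [hr]; rfl
        · simp [hr] at hres
          subst hres
          simp only at hq' hh' hc'
          refine ⟨s, by rw [hq']; exact hrun, ?_, ?_⟩
          · rw [← hB]; funext i
            have := hc' i; by_cases h : i = cc
            · simp [h] at this; simp [h, this.1]
            · simp [h] at this; exact this.1
          · rw [hq', hins]
            refine ⟨fun i h => ?_, ?_⟩
            · have := hc' i
              simp [h] at this; rw [this.2, hz i h]
            · have := hc' cc
              simp [hcb] at this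
              rw [this.2]
              exact ⟨_, hit, r, hr, hh'⟩
    | reset cc =>
      simp only [hins, Mid] at hmid
      obtain ⟨hz, hit⟩ := hmid
      simp only [mach, hins] at hres
      subst hres
      simp only [hm_stay] at hq' hh' hc'
      have hcc := hc' cc
      simp at hcc
      refine adv _ ⟨(c.h1, c.h2), c'.cbnd⟩ hins ⟨hit, c'.cbnd cc, hcc.2, ?_⟩ hq' rfl ?_ hh'
      · rw [← hB]; funext i
        have := hc' i; by_cases h : i = cc
        · simp [h]
        · simp [h] at this; simp [h, this.1]
      · intro i
        have := hc' i; by_cases h : i = cc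
        · simp [h] at this; rw [h, this.1]
        · simp [h] at this; rw [this.2, hz i]
    | once mv =>
      simp only [hins, Mid] at hmid
      obtain ⟨hz, hit⟩ := hmid
      simp only [mach, hins] at hres
      rcases hr : mv (tapeSym w c.h1) (tapeSym w c.h2) with _ | r
      · apply stuck; rw [hres]; simp [hr]; rfl
      · simp only [hr] at hres
        subst hres
        simp only at hq' hh' hc'
        refine adv _ ⟨(c'.h1, c'.h2), s.B⟩ hins ⟨rfl, r, ?_, ?_⟩ hq' ?_ ?_ rfl
        · rw [← hit]; exact hr
        · rw [← hit]; exact hh'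
        · rw [← hB]; exact funext fun i => (hc' i).1
        · intro i; rw [(hc' i).2, hz]

def st0 (k : ℕ) : St k := ⟨(0, 0), fun _ => 0⟩

theorem st0_valid (k n : ℕ) : VS n (st0 k) := ⟨⟨le_rfl, Nat.zero_le _⟩, fun _ => Nat.zero_le _⟩

theorem mach_accepts {k : ℕ} {A : Type} (P : List (Ins k A)) (w : List A) :
    (mach P).Accepts w ↔ ∃ s, Run w P (st0 k) s := by
  constructor
  · rintro ⟨c, hc, hF⟩
    have : MInv P w (st0 k) c := by
      clear hF
      induction hc with
      | refl => exact ⟨st0 k, rfl, rfl, mid_start w (st0 k) _ (fun _ => rfl) _⟩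
      | tail _ h ih => exact minv_step ih h
    obtain ⟨s, hs, _⟩ := this
    have hF' : c.q.1 = P.length := hF
    rw [hF', List.take_length] at hs
    exact ⟨s, hs⟩
  · rintro ⟨s, hs⟩
    obtain ⟨q', h1, h2⟩ := sim_run P [] rfl (st0_valid k w.length) hs ⟨0, by omega⟩ rfl
    exact ⟨_, h2, h1⟩

end JPat

/-! ### Colouring the variables by counters -/
namespace JPat

def Win (y : ℕ → ℕ) (m p i : ℕ) : Prop :=
  p < i ∧ i < m ∧ y p = y i ∧ ∀ q, p < q → q < i → y q ≠ y p

theorem coloring_aux (y : ℕ → ℕ) (m k : ℕ)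
    (h : ∀ p i, Win y m p i → ((Finset.Ico p i).image y).card ≤ k + 1) (j : ℕ) (hj : j ≤ m) :
    ∃ col : ℕ → Fin (k + 1), ∀ p i, Win y m p i → ∀ s t, p ≤ s → s < i → s < j → p ≤ t → t < i →
      t < j → col (y s) = col (y t) → y s = y t := by
  classical
  induction j with
  | zero => exact ⟨fun _ => 0, by intros; omega⟩
  | succ j ih =>
    obtain ⟨col, hcol⟩ := ih (by omega)
    by_cases hold : ∃ q, q < j ∧ y q = y j
    · -- the last earlier occurrence
      have : ∃ q, Win y m q j := by
        obtain ⟨q, hq, hyq⟩ := hold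
        have hP : (fun q => q < j ∧ y q = y j) (Nat.findGreatest (fun q => q < j ∧ y q = y j) j) :=
          Nat.findGreatest_spec (P := fun q => q < j ∧ y q = y j) hq.le ⟨hq, hyq⟩
        refine ⟨_, hP.1, by omega, hP.2, fun r hr hrj hyr => ?_⟩
        exact Nat.findGreatest_is_greatest (P := fun q => q < j ∧ y q = y j) hr hrj.le
          ⟨hrj, hyr.trans hP.2⟩
      obtain ⟨q, hq⟩ := this
      refine ⟨col, fun p i hw => ?_⟩
      -- replace `j` by `q`
      have key : ∀ t, p ≤ t → t < i → t < j → j < i → col (y j) = col (y t) → y j = y t := by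
        intro t h1 h2 h3 h4 h5
        by_cases hqp : p ≤ q
        · rw [← hq.2.2.1] at h5 ⊢
          exact hcol p i hw q t hqp (by have := hq.1; omega) hq.1 h1 h2 h3 h5
        · rw [← hq.2.2.1] at h5 ⊢
          exact hcol q j hq q t le_rfl hq.1 hq.1 (by omega) h3 h3 h5
      intro s t h1 h2 h3 h4 h5 h6 h7
      rcases Nat.lt_succ_iff_lt_or_eq.1 h3 with h3 | rfl
      · rcases Nat.lt_succ_iff_lt_or_eq.1 h6 with h6 | rfl
        · exact hcol p i hw s t h1 h2 h3 h4 h5 h6 h7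
        · exact (key s h1 h2 h3 h5 h7.symm).symm
      · rcases Nat.lt_succ_iff_lt_or_eq.1 h6 with h6 | rfl
        · exact key t h4 h5 h6 h2 h7
        · rfl
    · push Not at hold
      by_cases hex : ∃ p, ∃ i, Win y m p i ∧ p ≤ j ∧ j < i
      · obtain ⟨i0, hw0, hp0, hi0⟩ := Nat.find_spec hex
        set p0 := Nat.find hex with hp0def
        have hmin : ∀ p i, Win y m p i → p ≤ j → j < i → p0 ≤ p := fun p i h1 h2 h3 =>
          Nat.find_min' hex ⟨i, h1, h2, h3⟩
        have hcard : (((Finset.Ico p0 j).image y).image col).card < k + 1 := by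
          refine lt_of_le_of_lt Finset.card_image_le (lt_of_lt_of_le ?_ (h p0 i0 hw0))
          apply Finset.card_lt_card
          refine Finset.ssubset_iff_subset_ne.2 ⟨Finset.image_subset_image
            (Finset.Ico_subset_Ico_right hi0.le), fun he => ?_⟩
          have : y j ∈ (Finset.Ico p0 j).image y := by
            rw [he]; exact Finset.mem_image_of_mem _ (Finset.mem_Ico.2 ⟨hp0, hi0⟩)
          obtain ⟨r, hr, hyr⟩ := Finset.mem_image.1 this
          exact hold r (Finset.mem_Ico.1 hr).2 hyr
        obtain ⟨c, hc⟩ : ∃ c : Fin (k + 1), c ∉ ((Finset.Ico p0 j).image y).image col := by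
          by_contra hcon
          push Not at hcon
          have := Finset.eq_univ_of_forall hcon
          rw [this] at hcard
          simp at hcard
        have hc' : ∀ t, p0 ≤ t → t < j → c ≠ col (y t) := by
          intro t h1 h2 h3
          apply hc
          rw [h3]
          exact Finset.mem_image_of_mem _ (Finset.mem_image_of_mem _ (Finset.mem_Ico.2 ⟨h1, h2⟩))
        refine ⟨Function.update col (y j) c, fun p i hw s t h1 h2 h3 h4 h5 h6 h7 => ?_⟩
        rcases Nat.lt_succ_iff_lt_or_eq.1 h3 with h3 | rfl
        · rcases Nat.lt_succ_iff_lt_or_eq.1 h6 with h6 | rfl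
          · rw [Function.update_of_ne (hold s h3), Function.update_of_ne (hold t h6)] at h7
            exact hcol p i hw s t h1 h2 h3 h4 h5 h6 h7
          · rw [Function.update_of_ne (hold s h3), Function.update_self] at h7
            exact absurd h7.symm (hc' s (le_trans (hmin p i hw h4 h5) h1) h3)
        · rcases Nat.lt_succ_iff_lt_or_eq.1 h6 with h6 | rfl
          · rw [Function.update_of_ne (hold t h6), Function.update_self] at h7
            exact absurd h7 (hc' t (le_trans (hmin p i hw h1 h2) h4) h6)
          · rfl
      · refine ⟨col, fun p i hw s t h1 h2 h3 h4 h5 h6 h7 => ?_⟩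
        have : ¬ (j < i ∧ p ≤ j) := fun hh => hex ⟨p, i, hw, hh.2, hh.1⟩
        exact hcol p i hw s t h1 h2 (by omega) h4 h5 (by omega) h7

theorem vd_spec (α : List ℕ) : ∀ x : ℕ, ∀ β γ δ : List ℕ,
    α = β ++ [x] ++ γ ++ [x] ++ δ → γ.count x = 0 → γ.toFinset.card ≤ vd α := by
  have : vd α ∈ {k : ℕ | ∀ x : ℕ, ∀ β γ δ : List ℕ,
    α = β ++ [x] ++ γ ++ [x] ++ δ → γ.count x = 0 → γ.toFinset.card ≤ k} := by
    apply Nat.sInf_mem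
    refine ⟨α.length, fun x β γ δ h _ => ?_⟩
    refine (List.toFinset_card_le γ).trans ?_
    rw [h]; simp; omega
  exact this

theorem win_card (α : List ℕ) (p i : ℕ) (hw : Win (fun t => α.getD t 0) α.length p i) :
    ((Finset.Ico p i).image (fun t => α.getD t 0)).card ≤ vd α + 1 := by
  classical
  obtain ⟨h1, h2, h3, h4⟩ := hw
  simp only at h3 h4
  set x := α.getD p 0 with hx
  set γ := (α.take i).drop (p + 1) with hγ
  have hxp : α[p]'(by omega) = x := by rw [hx, List.getD_eq_getElem]
  have hxi : α[i] = x := by rw [h3, List.getD_eq_getElem]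
  have hdec : α = α.take p ++ [x] ++ γ ++ [x] ++ α.drop (i + 1) := by
    have e1 : α.take i = α.take p ++ [x] ++ γ := by
      rw [hγ, ← hxp, List.take_append_getElem (l := α) (i := p) (by omega)]
      conv_lhs => rw [← List.take_append_drop (p + 1) (α.take i)]
      rw [List.take_take, min_eq_left (by omega)]
    conv_lhs => rw [← List.take_append_drop i α, e1, List.drop_eq_getElem_cons h2, hxi]
    simp
  have hg : ∀ q, p < q → q < i → α.getD q 0 ∈ γ := by
    intro q hq1 hq2
    rw [hγ, List.mem_iff_getElem?]
    refine ⟨q - (p + 1), ?_⟩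
    rw [List.getElem?_drop, List.getElem?_take, if_pos (by omega),
      show p + 1 + (q - (p + 1)) = q by omega, List.getD_eq_getElem _ _ (by omega),
      List.getElem?_eq_getElem]
  have hcnt : γ.count x = 0 := by
    rw [List.count_eq_zero]
    intro hmem
    rw [hγ, List.mem_iff_getElem] at hmem
    obtain ⟨n, hn, hn'⟩ := hmem
    rw [List.getElem_drop, List.getElem_take] at hn'
    have : n < i - (p + 1) := by simpa [Nat.min_eq_left h2.le] using hn
    refine h4 (p + 1 + n) (by omega) (by omega) ?_
    rw [List.getD_eq_getElem _ _ (by omega), hn']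
  have := vd_spec α x _ _ _ hdec hcnt
  refine le_trans (Finset.card_le_card (t := insert x γ.toFinset) ?_)
    ((Finset.card_insert_le _ _).trans (by omega))
  intro z hz
  obtain ⟨t, ht, rfl⟩ := Finset.mem_image.1 hz
  obtain ⟨ht1, ht2⟩ := Finset.mem_Ico.1 ht
  rcases ht1.eq_or_lt with rfl | ht1
  · exact Finset.mem_insert_self _ _
  · exact Finset.mem_insert_of_mem (List.mem_toFinset.2 (hg t ht1 ht2))

def Good {k : ℕ} (α : List ℕ) (col : ℕ → Fin k) : Prop :=
  ∀ β x γ δ, α = β ++ x :: γ ++ x :: δ → x ∉ γ → ∀ a ∈ x :: γ, ∀ b ∈ x :: γ,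
    col a = col b → a = b

theorem exists_good (α : List ℕ) : ∃ col : ℕ → Fin (vd α + 1), Good α col := by
  obtain ⟨col, hcol⟩ := coloring_aux (fun t => α.getD t 0) α.length (vd α) (win_card α)
    α.length le_rfl
  refine ⟨col, fun β x γ δ hα hx a ha b hb hab => ?_⟩
  have hget : ∀ n (hn : n < (x :: γ).length), α.getD (β.length + n) 0 = (x :: γ)[n] := by
    intro n hn
    rw [hα, List.append_assoc, List.getD_append_right _ _ _ _ (by omega), Nat.add_sub_cancel_left,
      List.getD_append _ _ _ _ hn, List.getD_eq_getElem]
  have hlen : α.length = β.length + (γ.length + 1) + (δ.length + 1) := by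
    rw [hα]; simp; omega
  have hw : Win (fun t => α.getD t 0) α.length β.length (β.length + (γ.length + 1)) := by
    refine ⟨by omega, by omega, ?_, ?_⟩
    · have := hget 0 (by simp)
      simp only [Nat.add_zero, List.getElem_cons_zero] at this
      simp only [this]
      rw [hα, List.getD_append_right _ _ _ _ (by simp)]
      simp
    · intro q hq1 hq2 h
      have h0 := hget 0 (by simp)
      simp only [Nat.add_zero, List.getElem_cons_zero] at h0
      have h1 := hget (q - β.length) (by simp; omega)
      rw [show β.length + (q - β.length) = q by omega] at h1
      simp only [h0, h1] at h
      apply hx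
      obtain ⟨n, hn⟩ : ∃ n, q - β.length = n + 1 := ⟨q - β.length - 1, by omega⟩
      simp only [hn, List.getElem_cons_succ] at h
      rw [← h]; exact List.getElem_mem _
  obtain ⟨s, hs, rfl⟩ := List.mem_iff_getElem.1 ha
  obtain ⟨t, ht, rfl⟩ := List.mem_iff_getElem.1 hb
  have hs' := hs
  have ht' := ht
  rw [List.length_cons] at hs' ht'
  have := hcol _ _ hw (β.length + s) (β.length + t) (by omega) (by omega) (by omega) (by omega)
    (by omega) (by omega)
  simp only [hget s hs, hget t ht] at this
  exact this hab

/-- The counter of `z` still belongs to `z` after reading the list `π`. -/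
def Cur {k : ℕ} (col : ℕ → Fin k) (π : List ℕ) (z : ℕ) : Prop :=
  z ∈ π ∧ ∀ β x γ, π = β ++ x :: γ → x ∉ β → z ∈ β → col x ≠ col z

theorem cur_old {k : ℕ} {col : ℕ → Fin k} {π : List ℕ} {x z : ℕ} (hx : x ∈ π)
    (h : Cur col (π ++ [x]) z) : Cur col π z := by
  refine ⟨?_, fun β y γ hπ => h.2 β y (γ ++ [x]) (by rw [hπ]; simp)⟩
  have := h.1
  rw [List.mem_append, List.mem_singleton] at this
  rcases this with h | rfl
  · exact h
  · exact hx

theorem cur_new {k : ℕ} {col : ℕ → Fin k} {π : List ℕ} {x z : ℕ} (hx : x ∉ π)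
    (h : Cur col (π ++ [x]) z) : z = x ∨ (Cur col π z ∧ col x ≠ col z) := by
  have := h.1
  rw [List.mem_append, List.mem_singleton] at this
  rcases this with hz | rfl
  · right
    exact ⟨⟨hz, fun β y γ hπ => h.2 β y (γ ++ [x]) (by rw [hπ]; simp)⟩, h.2 π x [] rfl hx hz⟩
  · exact Or.inl rfl

theorem last_occ {π : List ℕ} {x : ℕ} (h : x ∈ π) : ∃ β γ, π = β ++ x :: γ ∧ x ∉ γ := by
  obtain ⟨a, b, h1, h2⟩ := List.eq_append_cons_of_mem (List.mem_reverse.2 h)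
  refine ⟨b.reverse, a.reverse, ?_, by simpa using h2⟩
  rw [← List.reverse_reverse π, h1]; simp

theorem cur_win {k : ℕ} {col : ℕ → Fin k} {α β γ δ : List ℕ} {x z : ℕ} (hg : Good α col)
    (hα : α = β ++ x :: γ ++ x :: δ) (hx : x ∉ γ) (hz : z ∈ x :: γ) :
    Cur col (β ++ x :: γ) z := by
  refine ⟨List.mem_append_right _ hz, fun β' x' γ' he hx' hz' hc => ?_⟩
  have hne : x' ≠ z := by rintro rfl; exact hx' hz'
  by_cases hzg : z ∈ γ'
  · obtain ⟨b1, b2, hb, hb2⟩ := last_occ hz'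
    obtain ⟨g1, g2, hg', hg2⟩ := List.eq_append_cons_of_mem hzg
    refine hne (hg b1 z (b2 ++ x' :: g1) (g2 ++ x :: δ) ?_ ?_ x' (by simp) z (by simp) hc)
    · rw [hα, he, hb, hg']; simp
    · simp [hb2, hg2, Ne.symm hne]
  · refine hne (hg β x γ δ hα hx x' ?_ z hz hc)
    rcases List.append_eq_append_iff.1 he with ⟨a, h1, h2⟩ | ⟨a, h1, h2⟩
    · rw [h2]; simp
    · cases a with
      | nil => simp at h2; rw [h2.1]; simp
      | cons a as =>
        simp at h2
        exfalso; apply hzg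
        rw [h2.2]; exact List.mem_append_right _ hz

end JPat

/-! ### The program for a pattern -/
namespace JPat

def mvAdv {A : Type} : JSym A → JSym A → Option (HInstr × HInstr)
  | _, .rend => none
  | _, _ => some (.right, .right)
def mvBack {A : Type} : JSym A → JSym A → Option (HInstr × HInstr) := fun _ _ => some (.left, .stay)
def mvFwd {A : Type} : JSym A → JSym A → Option (HInstr × HInstr) := fun _ _ => some (.right, .stay)
def mvStart {A : Type} : JSym A → JSym A → Option (HInstr × HInstr) :=
  fun _ _ => some (.right, .right)
open Classical in
noncomputable def mvMatch {A : Type} : JSym A → JSym A → Option (HInstr × HInstr)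
  | .ch a, .ch b => if a = b then some (.right, .right) else none
  | _, _ => none
def mvEnd {A : Type} : JSym A → JSym A → Option (HInstr × HInstr)
  | _, .rend => some (.stay, .stay)
  | _, _ => none

theorem tape_rend {A : Type} (w : List A) (h : ℕ) : tapeSym w h = .rend ↔ w.length < h := by
  unfold tapeSym
  split_ifs with h0
  · simp [h0]
  · rcases hw : w[h - 1]? with _ | a
    · rw [List.getElem?_eq_none_iff] at hw; simp; omega
    · obtain ⟨h', _⟩ := List.getElem?_eq_some_iff.1 hw; simp; omega

theorem tape_ch {A : Type} (w : List A) (h : ℕ) (a : A) :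
    tapeSym w (h + 1) = .ch a ↔ w[h]? = some a := by
  unfold tapeSym
  rw [if_neg (by omega), Nat.add_sub_cancel]
  rcases w[h]? with _ | b <;> simp

theorem hm_rr {n : ℕ} {h : ℕ × ℕ} (hv : VH n h) (h2 : h.2 ≤ n) :
    hm n h (.right, .right) = (h.1 + 1, h.2 + 1) := by
  unfold hm
  have := hv.1
  rw [if_pos (by simp only [HInstr.toInt]; omega)]
  ext <;> simp only [HInstr.toInt] <;> omega

theorem hm_ls {n : ℕ} {h : ℕ × ℕ} (hv : VH n h) :
    hm n h (.left, .stay) = (h.1 - 1, h.2) := by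
  unfold hm
  obtain ⟨h1, h2⟩ := hv
  split_ifs with hc
  · simp only [HInstr.toInt] at hc
    ext <;> simp only [HInstr.toInt] <;> omega
  · simp only [HInstr.toInt] at hc
    ext <;> simp only
    omega

theorem hm_rs {n : ℕ} {h : ℕ × ℕ} (hv : VH n h) :
    hm n h (.right, .stay) = (min (h.1 + 1) h.2, h.2) := by
  unfold hm
  obtain ⟨h1, h2⟩ := hv
  split_ifs with hc
  · simp only [HInstr.toInt] at hc
    ext <;> simp only [HInstr.toInt] <;> omega
  · simp only [HInstr.toInt] at hc
    ext <;> simp only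
    omega

theorem mv_adv {A : Type} {w : List A} {h h' : ℕ × ℕ} (hv : VH w.length h) :
    Mv w mvAdv h h' ↔ h.2 + 1 ≤ w.length + 1 ∧ h' = (h.1 + 1, h.2 + 1) := by
  unfold Mv
  by_cases hr : w.length < h.2
  · rw [(tape_rend w h.2).2 hr]
    simp [mvAdv]; omega
  · have h1 : tapeSym w h.2 ≠ .rend := fun hh => hr ((tape_rend w h.2).1 hh)
    have h2 : mvAdv (tapeSym w h.1) (tapeSym w h.2) = some (.right, .right) := by
      rcases hb : tapeSym w h.2 with _ | _ | b
      · simp [mvAdv]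
      · exact absurd hb h1
      · simp [mvAdv]
    rw [h2]
    constructor
    · rintro ⟨r, hh, rfl⟩
      simp only [Option.some.injEq] at hh; subst hh
      exact ⟨by omega, hm_rr hv (by omega)⟩
    · rintro ⟨_, rfl⟩
      exact ⟨_, rfl, (hm_rr hv (by omega)).symm⟩

theorem iter_adv {A : Type} {w : List A} {t : ℕ} {h h' : ℕ × ℕ} (hv : VH w.length h) :
    Iter w mvAdv t h h' ↔ h.2 + t ≤ w.length + 1 ∧ h' = (h.1 + t, h.2 + t) := by
  induction t generalizing h' with
  | zero => simp [Iter]; intro _; exact hv.2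
  | succ t ih =>
    constructor
    · rintro ⟨g, h1, h2⟩
      rw [mv_adv (iter_valid hv h1)] at h2
      obtain ⟨h3, rfl⟩ := ih.1 h1
      obtain ⟨h4, rfl⟩ := h2
      exact ⟨h4, rfl⟩
    · rintro ⟨h1, rfl⟩
      have : Iter w mvAdv t h (h.1 + t, h.2 + t) := ih.2 ⟨by omega, rfl⟩
      exact ⟨_, this, (mv_adv (iter_valid hv this)).2 ⟨by simp only; omega, rfl⟩⟩

theorem iter_back {A : Type} {w : List A} {t : ℕ} {h h' : ℕ × ℕ} (hv : VH w.length h) :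
    Iter w mvBack t h h' ↔ h' = (h.1 - t, h.2) := by
  induction t generalizing h' with
  | zero => simp [Iter]
  | succ t ih =>
    simp only [Iter, ih, exists_eq_left, Mv, mvBack, Option.some.injEq, exists_eq_left']
    rw [hm_ls (h := (h.1 - t, h.2)) ⟨by have := hv.1; simp only; omega, hv.2⟩]
    simp only [Nat.sub_sub]

theorem iter_fwd {A : Type} {w : List A} {t : ℕ} {h h' : ℕ × ℕ} (hv : VH w.length h) :
    Iter w mvFwd t h h' ↔ h' = (min (h.1 + t) h.2, h.2) := by
  induction t generalizing h' with
  | zero => simp [Iter, hv.1]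
  | succ t ih =>
    simp only [Iter, ih, exists_eq_left, Mv, mvFwd, Option.some.injEq, exists_eq_left']
    rw [hm_rs (h := (min (h.1 + t) h.2, h.2)) ⟨by simp only; omega, hv.2⟩]
    rw [show min (min (h.1 + t) h.2 + 1) h.2 = min (h.1 + (t + 1)) h.2 by omega]

theorem mvMatch_some {A : Type} {a b : JSym A} {r} :
    mvMatch a b = some r ↔ r = (.right, .right) ∧ ∃ x, a = .ch x ∧ b = .ch x := by
  cases a <;> cases b <;> simp [mvMatch]
  · rename_i a b
    constructor
    · rintro ⟨rfl, rfl⟩; exact ⟨rfl, rfl⟩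
    · rintro ⟨rfl, h⟩; exact ⟨h.symm, rfl⟩

theorem iter_match {A : Type} {w : List A} {t a b : ℕ} {h' : ℕ × ℕ}
    (hv : VH w.length (a + 1, b + 1)) :
    Iter w mvMatch t (a + 1, b + 1) h' ↔
      (∀ i, i < t → ∃ x, w[a + i]? = some x ∧ w[b + i]? = some x) ∧
        h' = (a + 1 + t, b + 1 + t) := by
  induction t generalizing h' with
  | zero => simp [Iter]
  | succ t ih =>
    constructor
    · rintro ⟨g, h1, r, h2, rfl⟩
      obtain ⟨h3, rfl⟩ := ih.1 h1
      obtain ⟨rfl, x, h4, h5⟩ := mvMatch_some.1 h2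
      simp only [show a + 1 + t = a + t + 1 by omega, show b + 1 + t = b + t + 1 by omega] at *
      rw [tape_ch] at h4 h5
      refine ⟨fun i hi => ?_, ?_⟩
      · rcases Nat.lt_succ_iff_lt_or_eq.1 hi with hi | rfl
        · exact h3 i hi
        · exact ⟨x, h4, h5⟩
      · obtain ⟨hlt, _⟩ := List.getElem?_eq_some_iff.1 h5
        rw [hm_rr (iter_valid hv h1) hlt]
        ext <;> simp only <;> omega
    · rintro ⟨h3, rfl⟩
      have h1 : Iter w mvMatch t (a + 1, b + 1) (a + 1 + t, b + 1 + t) :=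
        ih.2 ⟨fun i hi => h3 i (by omega), rfl⟩
      obtain ⟨x, h4, h5⟩ := h3 t (by omega)
      obtain ⟨hlt, _⟩ := List.getElem?_eq_some_iff.1 h5
      refine ⟨_, h1, _, mvMatch_some.2 ⟨rfl, x, ?_, ?_⟩, ?_⟩
      · simp only [show a + 1 + t = a + t + 1 by omega]; rwa [tape_ch]
      · simp only [show b + 1 + t = b + t + 1 by omega]; rwa [tape_ch]
      · rw [hm_rr (iter_valid hv h1) (by simp only; omega)]
        ext <;> simp only <;> omega

theorem run_back {k : ℕ} {A : Type} {w : List A} (col : ℕ → Fin k) (L : List ℕ) (s s' : St k)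
    (hv : VH w.length s.h) :
    Run w (L.map (fun z => Ins.loop (col z) mvBack)) s s' ↔
      s' = ⟨(s.h.1 - (L.map (fun z => s.B (col z))).sum, s.h.2), s.B⟩ := by
  induction L generalizing s with
  | nil => simp [Run]
  | cons z L ih =>
    simp only [List.map_cons, Run, Ex, iter_back hv, List.sum_cons]
    constructor
    · rintro ⟨⟨g, B⟩, ⟨h1, h2⟩, h3⟩
      simp only at h1 h2; subst h1 h2
      rw [ih ⟨(s.h.1 - s.B (col z), s.h.2), s.B⟩ ⟨by have := hv.1; simp only; omega, hv.2⟩] at h3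
      rw [h3]; simp only [Nat.sub_sub]
    · intro h
      refine ⟨⟨(s.h.1 - s.B (col z), s.h.2), s.B⟩, ⟨rfl, rfl⟩, ?_⟩
      rw [ih ⟨(s.h.1 - s.B (col z), s.h.2), s.B⟩ ⟨by have := hv.1; simp only; omega, hv.2⟩, h]
      simp only [Nat.sub_sub]

theorem run_fwd {k : ℕ} {A : Type} {w : List A} (col : ℕ → Fin k) (L : List ℕ) (s s' : St k)
    (hv : VH w.length s.h) :
    Run w (L.map (fun z => Ins.loop (col z) mvFwd)) s s' ↔
      s' = ⟨(min (s.h.1 + (L.map (fun z => s.B (col z))).sum) s.h.2, s.h.2), s.B⟩ := by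
  induction L generalizing s with
  | nil => simp [Run, hv.1]
  | cons z L ih =>
    simp only [List.map_cons, Run, Ex, iter_fwd hv, List.sum_cons]
    have e : ∀ a b c d : ℕ, min (min (a + b) d + c) d = min (a + (b + c)) d := by intros; omega
    constructor
    · rintro ⟨⟨g, B⟩, ⟨h1, h2⟩, h3⟩
      simp only at h1 h2; subst h1 h2
      rw [ih ⟨(min (s.h.1 + s.B (col z)) s.h.2, s.h.2), s.B⟩ ⟨by simp only; omega, hv.2⟩] at h3
      rw [h3]; simp only [e]
    · intro h
      refine ⟨⟨(min (s.h.1 + s.B (col z)) s.h.2, s.h.2), s.B⟩, ⟨rfl, rfl⟩, ?_⟩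
      rw [ih ⟨(min (s.h.1 + s.B (col z)) s.h.2, s.h.2), s.B⟩ ⟨by simp only; omega, hv.2⟩, h]
      simp only [e]

def im {A : Type} (σ : ℕ → List A) (π : List ℕ) : List A := (π.map σ).flatten

theorem im_append {A : Type} (σ : ℕ → List A) (π π' : List ℕ) :
    im σ (π ++ π') = im σ π ++ im σ π' := by simp [im]

theorem im_cons {A : Type} (σ : ℕ → List A) (x : ℕ) (π : List ℕ) :
    im σ (x :: π) = σ x ++ im σ π := by simp [im]

theorem im_nil {A : Type} (σ : ℕ → List A) : im σ [] = [] := rfl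

theorem im_sum {k : ℕ} {A : Type} (σ : ℕ → List A) (col : ℕ → Fin k) (B : Fin k → ℕ) (L : List ℕ)
    (h : ∀ z ∈ L, B (col z) = (σ z).length) :
    (L.map (fun z => B (col z))).sum = (im σ L).length := by
  induction L with
  | nil => rfl
  | cons z L ih =>
    rw [im_cons, List.map_cons, List.sum_cons, List.length_append, h z (by simp),
      ih (fun a ha => h a (by simp [ha]))]

def oldBlock {k : ℕ} (A : Type) (col : ℕ → Fin k) (γ : List ℕ) (x : ℕ) : List (Ins k A) → Prop :=
  fun P => P = (x :: γ).map (fun z => Ins.loop (col z) mvBack) ++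
    ([Ins.loop (col x) mvMatch] ++ (γ ++ [x]).map (fun z => Ins.loop (col z) mvFwd))

theorem exists_block {k : ℕ} (A : Type) (col : ℕ → Fin k) (π : List ℕ) (x : ℕ) :
    ∃ P : List (Ins k A), (x ∉ π → P = [Ins.reset (col x), Ins.loop (col x) mvAdv]) ∧
      (x ∈ π → ∃ β γ, π = β ++ x :: γ ∧ x ∉ γ ∧ oldBlock A col γ x P) := by
  by_cases hx : x ∈ π
  · obtain ⟨β, γ, h1, h2⟩ := last_occ hx
    exact ⟨_, fun h => absurd hx h, fun _ => ⟨β, γ, h1, h2, rfl⟩⟩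
  · exact ⟨_, fun _ => rfl, fun h => absurd h hx⟩

noncomputable def block {k : ℕ} (A : Type) (col : ℕ → Fin k) (π : List ℕ) (x : ℕ) :
    List (Ins k A) := (exists_block A col π x).choose

/-- The invariant between two blocks. -/
def Inv {k : ℕ} {A : Type} (w : List A) (col : ℕ → Fin k) (π : List ℕ) (s : St k)
    (σ : ℕ → List A) : Prop :=
  s.h = ((im σ π).length + 1, (im σ π).length + 1) ∧ im σ π <+: w ∧
    ∀ z, Cur col π z → s.B (col z) = (σ z).length

theorem old_run {k : ℕ} {A : Type} {w : List A} {col : ℕ → Fin k} {α β γ δ : List ℕ} {x : ℕ}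
    {P : List (Ins k A)} (hg : Good α col) (hα : α = β ++ x :: γ ++ x :: δ) (hx : x ∉ γ)
    (hP : oldBlock A col γ x P) {s s' : St k} {σ : ℕ → List A}
    (hi : Inv w col (β ++ x :: γ) s σ) :
    Run w P s s' ↔ im σ (β ++ x :: γ ++ [x]) <+: w ∧
      s' = ⟨((im σ (β ++ x :: γ ++ [x])).length + 1, (im σ (β ++ x :: γ ++ [x])).length + 1), s.B⟩ := by
  obtain ⟨⟨sh1, sh2⟩, B⟩ := s
  obtain ⟨h1, ⟨v, hv⟩, h3⟩ := hi
  simp only [Prod.mk.injEq] at h1 h3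
  obtain ⟨h1, h1'⟩ := h1
  have hB : ∀ z ∈ x :: γ, B (col z) = (σ z).length := fun z hz => h3 z (cur_win hg hα hx hz)
  have hBx : B (col x) = (σ x).length := hB x (by simp)
  have hB' : ∀ z ∈ γ ++ [x], B (col z) = (σ z).length := fun z hz => hB z (by
    simp at hz ⊢; tauto)
  have hlen : w.length = (im σ (β ++ x :: γ)).length + v.length := by rw [← hv]; simp
  have hpos : ∀ i, i < (σ x).length → w[(im σ β).length + i]? = (σ x)[i]? := by
    intro i hi
    rw [← hv, im_append, im_cons, List.append_assoc, List.append_assoc,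
      List.getElem?_append_right (by omega), Nat.add_sub_cancel_left, List.getElem?_append_left hi]
  have hpos2 : ∀ i, w[(im σ (β ++ x :: γ)).length + i]? = v[i]? := by
    intro i
    rw [← hv, List.getElem?_append_right (by omega), Nat.add_sub_cancel_left]
  have hpre : im σ (β ++ x :: γ ++ [x]) <+: w ↔
      ∀ i, i < (σ x).length → ∃ a, w[(im σ β).length + i]? = some a ∧
        w[(im σ (β ++ x :: γ)).length + i]? = some a := by
    rw [im_append, ← hv, List.prefix_append_right_inj, hv, im_cons, im_nil, List.append_nil,
      List.prefix_iff_getElem?]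
    constructor
    · intro h i hi
      rw [hpos i hi, hpos2, h i hi]
      exact ⟨(σ x)[i], by simp [hi], rfl⟩
    · intro h i hi
      obtain ⟨a, h4, h5⟩ := h i hi
      rw [hpos i hi] at h4
      rw [hpos2] at h5
      rw [h5, ← h4]; simp [hi]
  have e1 : (im σ (β ++ x :: γ)).length = (im σ β).length + (im σ (x :: γ)).length := by
    rw [im_append]; simp
  have e2 : (im σ (β ++ x :: γ ++ [x])).length =
      (im σ β).length + (σ x).length + (im σ (γ ++ [x])).length := by
    simp only [im_append, im_cons, List.length_append]; omega
  have e3 : (im σ (β ++ x :: γ ++ [x])).length =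
      (im σ (β ++ x :: γ)).length + (σ x).length := by
    rw [im_append]; simp [im_cons, im_nil]
  rw [hP, run_append, hpre]
  have hvh : VH w.length (sh1, sh2) := ⟨by simp only; omega, by simp only; omega⟩
  have hvh2 : VH w.length ((im σ β).length + 1, (im σ (β ++ x :: γ)).length + 1) :=
    ⟨by simp only; omega, by simp only; omega⟩
  have hb : ∀ s'', Run w ((x :: γ).map (fun z => Ins.loop (col z) mvBack)) ⟨(sh1, sh2), B⟩ s'' ↔
      s'' = ⟨((im σ β).length + 1, (im σ (β ++ x :: γ)).length + 1), B⟩ := by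
    intro s''
    rw [run_back _ _ _ _ hvh]
    simp only [im_sum σ col B _ hB]
    rw [show sh1 - (im σ (x :: γ)).length = (im σ β).length + 1 by omega, h1']
  simp only [hb, exists_eq_left, List.singleton_append, Run, Ex, iter_match hvh2, hBx]
  have hf : (∀ i, i < (σ x).length → ∃ a, w[(im σ β).length + i]? = some a ∧
        w[(im σ (β ++ x :: γ)).length + i]? = some a) → ∀ s'',
      Run w ((γ ++ [x]).map (fun z => Ins.loop (col z) mvFwd))
        ⟨((im σ β).length + 1 + (σ x).length,
          (im σ (β ++ x :: γ)).length + 1 + (σ x).length), B⟩ s'' ↔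
      s'' = ⟨((im σ (β ++ x :: γ ++ [x])).length + 1,
        (im σ (β ++ x :: γ ++ [x])).length + 1), B⟩ := by
    intro hh s''
    have := (hpre.2 hh).length_le
    rw [run_fwd _ _ _ _ ⟨by simp only; omega, by simp only; omega⟩]
    simp only [im_sum σ col B _ hB']
    rw [show min ((im σ β).length + 1 + (σ x).length + (im σ (γ ++ [x])).length)
      ((im σ (β ++ x :: γ)).length + 1 + (σ x).length) =
      (im σ (β ++ x :: γ ++ [x])).length + 1 by omega,
      show (im σ (β ++ x :: γ)).length + 1 + (σ x).length =
      (im σ (β ++ x :: γ ++ [x])).length + 1 by omega]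
  constructor
  · rintro ⟨⟨g, B'⟩, ⟨h4, h5, h6⟩, h7⟩
    simp only at h4 h6; subst h4 h6
    exact ⟨h5, (hf h5 _).1 h7⟩
  · rintro ⟨h5, h6⟩
    exact ⟨⟨_, B⟩, ⟨rfl, h5, rfl⟩, (hf h5 _).2 h6⟩

theorem im_update {A : Type} (σ : ℕ → List A) (π : List ℕ) (x : ℕ) (u : List A) (hx : x ∉ π) :
    im (Function.update σ x u) π = im σ π := by
  unfold im
  congr 1
  apply List.map_congr_left
  intro z hz
  rw [Function.update_of_ne]; rintro rfl; exact hx hz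

theorem block_sound {k : ℕ} {A : Type} {w : List A} {col : ℕ → Fin k} {α π δ : List ℕ} {x : ℕ}
    (hg : Good α col) (hα : α = π ++ x :: δ) {s s' : St k} {σ : ℕ → List A}
    (hi : Inv w col π s σ) (hr : Run w (block A col π x) s s') :
    ∃ σ', Inv w col (π ++ [x]) s' σ' := by
  obtain ⟨hnew, hold⟩ := (exists_block A col π x).choose_spec
  by_cases hx : x ∈ π
  · obtain ⟨β, γ, rfl, h2, h3⟩ := hold hx
    obtain ⟨h4, rfl⟩ := (old_run hg hα h2 h3 hi).1 hr
    exact ⟨σ, rfl, h4, fun z hz => hi.2.2 z (cur_old hx hz)⟩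
  · unfold block at hr
    rw [hnew hx] at hr
    obtain ⟨⟨g, B⟩, ⟨h1, b, hb, h2⟩, ⟨g', B'⟩, ⟨h3, h4⟩, rfl⟩ := hr
    obtain ⟨h5, ⟨v, hv⟩, h6⟩ := hi
    simp only at h1 h2 h3 h4
    subst h1 h2 h3
    have hlen : w.length = (im σ π).length + v.length := by rw [← hv]; simp
    rw [iter_adv (by rw [h5]; exact ⟨le_rfl, by simp only; omega⟩), Function.update_self, h5] at h4
    obtain ⟨h7, rfl⟩ := h4
    simp only at h7
    have hbv : (v.take b).length = b := by rw [List.length_take]; omega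
    have him : im (Function.update σ x (v.take b)) (π ++ [x]) = im σ π ++ v.take b := by
      rw [im_append, im_update _ _ _ _ hx, im_cons, im_nil, Function.update_self, List.append_nil]
    refine ⟨Function.update σ x (v.take b), ?_, ?_, ?_⟩
    · rw [him, List.length_append, hbv]
      ext <;> simp only <;> omega
    · rw [him, ← hv, List.prefix_append_right_inj]; exact List.take_prefix _ _
    · intro z hz
      simp only
      by_cases hzx : z = x
      · subst hzx; simp [hbv]
      · obtain ⟨h8, h9⟩ := (cur_new hx hz).resolve_left hzx
        rw [Function.update_of_ne (Ne.symm h9), Function.update_of_ne hzx, h6 z h8]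

theorem block_complete {k : ℕ} {A : Type} {w : List A} {col : ℕ → Fin k} {α π δ : List ℕ} {x : ℕ}
    (hg : Good α col) (hα : α = π ++ x :: δ) {s : St k} {σ : ℕ → List A}
    (hi : Inv w col π s σ) (hw : im σ (π ++ [x]) <+: w) :
    ∃ s', Run w (block A col π x) s s' ∧ Inv w col (π ++ [x]) s' σ := by
  obtain ⟨hnew, hold⟩ := (exists_block A col π x).choose_spec
  by_cases hx : x ∈ π
  · obtain ⟨β, γ, rfl, h2, h3⟩ := hold hx
    exact ⟨_, (old_run hg hα h2 h3 hi).2 ⟨hw, rfl⟩, rfl, hw,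
      fun z hz => hi.2.2 z (cur_old hx hz)⟩
  · obtain ⟨h5, _, h6⟩ := hi
    have him : (im σ (π ++ [x])).length = (im σ π).length + (σ x).length := by
      rw [im_append]; simp [im_cons, im_nil]
    have hle := hw.length_le
    refine ⟨⟨((im σ (π ++ [x])).length + 1, (im σ (π ++ [x])).length + 1),
      Function.update s.B (col x) (σ x).length⟩, ?_, rfl, hw, ?_⟩
    · unfold block
      rw [hnew hx]
      refine ⟨⟨s.h, Function.update s.B (col x) (σ x).length⟩, ⟨rfl, _, by omega, rfl⟩,
        ⟨((im σ (π ++ [x])).length + 1, (im σ (π ++ [x])).length + 1),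
          Function.update s.B (col x) (σ x).length⟩, ⟨rfl, ?_⟩, rfl⟩
      rw [iter_adv (by rw [h5]; exact ⟨le_rfl, by simp only; omega⟩), h5]
      simp only [Function.update_self]
      refine ⟨by omega, ?_⟩
      ext <;> simp only <;> omega
    · intro z hz
      simp only
      by_cases hzx : z = x
      · subst hzx; simp
      · obtain ⟨h8, h9⟩ := (cur_new hx hz).resolve_left hzx
        rw [Function.update_of_ne (Ne.symm h9), h6 z h8]

noncomputable def prog {k : ℕ} (A : Type) (col : ℕ → Fin k) : List ℕ → List ℕ → List (Ins k A)
  | _, [] => []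
  | π, x :: r => block A col π x ++ prog A col (π ++ [x]) r

theorem prog_sound {k : ℕ} {A : Type} {w : List A} {col : ℕ → Fin k} {α : List ℕ}
    (hg : Good α col) (r π : List ℕ) (hα : α = π ++ r) {s s' : St k} {σ : ℕ → List A}
    (hi : Inv w col π s σ) (hr : Run w (prog A col π r) s s') :
    ∃ σ', Inv w col α s' σ' := by
  induction r generalizing π s σ with
  | nil =>
    simp only [prog, Run] at hr; subst hr
    exact ⟨σ, by rw [hα]; simpa using hi⟩
  | cons x r ih =>
    rw [prog, run_append] at hr
    obtain ⟨s'', h1, h2⟩ := hr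
    obtain ⟨σ', h3⟩ := block_sound hg hα hi h1
    exact ih (π ++ [x]) (by simp [hα]) h3 h2

theorem prog_complete {k : ℕ} {A : Type} {w : List A} {col : ℕ → Fin k} {α : List ℕ}
    (hg : Good α col) (r π : List ℕ) (hα : α = π ++ r) {s : St k} {σ : ℕ → List A}
    (hi : Inv w col π s σ) (hw : im σ α = w) :
    ∃ s', Run w (prog A col π r) s s' ∧ Inv w col α s' σ := by
  induction r generalizing π s with
  | nil => exact ⟨s, rfl, by rw [hα]; simpa using hi⟩
  | cons x r ih =>
    obtain ⟨s'', h1, h2⟩ := block_complete hg hα hi (w := w) (by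
      rw [← hw, hα, show π ++ x :: r = (π ++ [x]) ++ r by simp, im_append σ (π ++ [x]) r]
      exact List.prefix_append _ _)
    obtain ⟨s', h3, h4⟩ := ih (π ++ [x]) (by simp [hα]) h2
    refine ⟨s', ?_, h4⟩
    rw [prog, run_append]
    exact ⟨s'', h1, h3⟩

theorem main {k : ℕ} {A : Type} (α : List ℕ) (col : ℕ → Fin k) (hg : Good α col) :
    (mach ([Ins.once mvStart] ++ (prog A col [] α ++ [Ins.once mvEnd]))).Lang = PatternLang A α := by
  ext w
  have hstart : hm w.length (0, 0) (.right, .right) = (1, 1) :=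
    hm_rr ⟨le_rfl, Nat.zero_le _⟩ (Nat.zero_le _)
  have hinv : ∀ σ : ℕ → List A, Inv w col [] ⟨(1, 1), fun _ => 0⟩ σ := fun σ =>
    ⟨rfl, List.nil_prefix, fun z hz => absurd hz.1 (by simp)⟩
  change (mach _).Accepts w ↔ ∃ σ : ℕ → List A, w = im σ α
  rw [mach_accepts]
  simp only [run_append]
  constructor
  · rintro ⟨s, ⟨g, B⟩, ⟨a, ⟨h1, r, h2, h3⟩, h4⟩, b, h5, c, ⟨h6, r', h7, h8⟩, h9⟩
    simp only [mvStart, Option.some.injEq] at h2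
    subst h2
    rw [show (st0 k).h = (0, 0) from rfl, hstart] at h3
    have : (⟨g, B⟩ : St k) = ⟨(1, 1), fun _ => 0⟩ := by
      have h4' : (⟨g, B⟩ : St k) = a := h4
      rw [h4']; cases a; simp only at h1 h3; rw [h1, h3]; rfl
    rw [this] at h5
    obtain ⟨σ, hσ⟩ := prog_sound hg α [] rfl (hinv fun _ => []) h5
    refine ⟨σ, ?_⟩
    obtain ⟨h10, h11, _⟩ := hσ
    have hend : tapeSym w b.h.2 = .rend := by
      rcases hb : tapeSym w b.h.2 with _ | _ | x
      · rw [hb] at h7; simp [mvEnd] at h7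
      · rfl
      · rw [hb] at h7; simp [mvEnd] at h7
    rw [tape_rend, h10] at hend
    exact (h11.eq_of_length_le (by simp only at hend; omega)).symm
  · rintro ⟨σ, hσ⟩
    obtain ⟨s, h1, h2⟩ := prog_complete hg α [] rfl (hinv σ) hσ.symm
    refine ⟨s, ⟨(1, 1), fun _ => 0⟩, ⟨⟨(1, 1), fun _ => 0⟩, ⟨rfl, _, rfl, hstart.symm⟩, rfl⟩, s, h1, s, ⟨rfl, ?_⟩, rfl⟩
    refine ⟨(.stay, .stay), ?_, hm_stay.symm⟩
    rw [(tape_rend w s.h.2).2 (by rw [h2.1, hσ]; simp)]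
    simp [mvEnd]

end JPat

/-- Theorem 3 of the paper. Let `α` be a terminal-free
pattern. Then there exists a Janus automaton `M` with `vd(α) + 1` counters
such that `L(M) = L(α)`. -/
theorem statement13 {A : Type} [Fintype A] [Nonempty A]
    (α : List ℕ) (hα : α ≠ []) :
    ∃ M : JFA (vd α + 1) A, M.Lang = PatternLang A α := by
  obtain ⟨col, hcol⟩ := JPat.exists_good α
  exact ⟨_, JPat.main α col hcol⟩
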